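/- Let H be a finite group with a generating set T of cardinality d, let X be a normed vector space, let C > 0, and let Φ: H → X be a map that is 1-Lipschitz with respect to the word metric d_T and satisfies (1/#H)·Σ_{x∈H} ‖Φ(x)‖² ≤ C. Then there exist x, y ∈ H with d_T(x,y) > log(#H/2)/log(2d+1) − 1 and ‖Φ(x) − Φ(y)‖ ≤ 2√(2C). -/

import Mathlib

/-- The word norm of `g` with respect to `S`: the least length of an expression
of `g` as a product of elements of `S ∪ S⁻¹`. -/
noncomputable def wordNorm {G : Type*} [Group G] (S : Set G) (g : G) : ℕ :=
  sInf {n | ∃ l : List G, (∀ x ∈ l, x ∈ S ∨ x⁻¹ ∈ S) ∧ l.length = n ∧ l.prod = g}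

/-- The word metric `d_S(x, y) = ‖x y⁻¹‖_S`. -/
noncomputable def wordDist {G : Type*} [Group G] (S : Set G) (x y : G) : ℕ :=
  wordNorm S (x * y⁻¹)

/-!
By Markov's inequality, at least half of the points of `H` have image in the ball of radius
`√(2C)` about the origin, so any two of them have images at distance at most `2√(2C)`. On the other
hand a word ball of radius `n` has at most `(2d + 1) ^ n` points, so this half of `H` cannot be
contained in a word ball of radius smaller than `log (#H / 2) / log (2d + 1)`.
-/

open Finset

section WordMetric

open scoped Pointwise

variable {G : Type*} [Group G]

theorem list_prod_mem_pow_length {M : Type*} [Monoid M] {S : Set M} {l : List M}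
    (hl : ∀ x ∈ l, x ∈ S) : l.prod ∈ S ^ l.length :=
  Set.mem_pow.2 ⟨fun i => ⟨l.get i, hl _ (l.get_mem i)⟩, by simp only [List.ofFn_get]⟩

theorem exists_list_length_eq_wordNorm {S : Set G} {g : G} (hg : g ∈ Subgroup.closure S) :
    ∃ l : List G, (∀ x ∈ l, x ∈ S ∨ x⁻¹ ∈ S) ∧ l.length = wordNorm S g ∧ l.prod = g := by
  rw [← Subgroup.mem_toSubmonoid, Subgroup.closure_toSubmonoid] at hg
  obtain ⟨l, hl, hprod⟩ := Submonoid.exists_list_of_mem_closure hg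
  exact Nat.sInf_mem
    (s := {n | ∃ l : List G, (∀ x ∈ l, x ∈ S ∨ x⁻¹ ∈ S) ∧ l.length = n ∧ l.prod = g})
    ⟨l.length, l, hl, rfl, hprod⟩

theorem mem_insert_one_union_inv_pow_of_wordNorm_le {S : Set G} {g : G}
    (hg : g ∈ Subgroup.closure S) {n : ℕ} (hn : wordNorm S g ≤ n) :
    g ∈ insert 1 (S ∪ S⁻¹) ^ n := by
  obtain ⟨l, hl, hlength, rfl⟩ := exists_list_length_eq_wordNorm hg
  exact Set.pow_subset_pow (Set.subset_insert _ _) (Set.mem_insert _ _) (hlength.trans_le hn)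
    (list_prod_mem_pow_length hl)

theorem card_le_pow_of_forall_wordDist_le {T : Finset G}
    (hT : Subgroup.closure (T : Set G) = ⊤) {A : Finset G} {x : G} {n : ℕ}
    (hA : ∀ y ∈ A, wordDist (T : Set G) y x ≤ n) :
    #A ≤ (2 * #T + 1) ^ n := by
  classical
  have hball : ∀ y ∈ A, y * x⁻¹ ∈ insert 1 (T ∪ T⁻¹) ^ n := fun y hy => by
    have hmem := mem_insert_one_union_inv_pow_of_wordNorm_le (hT ▸ Subgroup.mem_top _) (hA y hy)
    exact_mod_cast hmem
  have hgenerators : #(insert 1 (T ∪ T⁻¹)) ≤ 2 * #T + 1 := by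
    grw [card_insert_le, card_union_le, card_inv, two_mul]
  calc #A ≤ #(insert 1 (T ∪ T⁻¹) ^ n) :=
        card_le_card_of_injOn (· * x⁻¹) hball (mul_left_injective x⁻¹).injOn
    _ ≤ #(insert 1 (T ∪ T⁻¹)) ^ n := card_pow_le
    _ ≤ (2 * #T + 1) ^ n := Nat.pow_le_pow_left hgenerators n

theorem exists_mem_card_le_pow_wordDist {T : Finset G}
    (hT : Subgroup.closure (T : Set G) = ⊤) {A : Finset G} (hA : A.Nonempty) (x : G) :
    ∃ y ∈ A, #A ≤ (2 * #T + 1) ^ wordDist (T : Set G) y x := by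
  obtain ⟨y, hy, hmax⟩ := A.exists_max_image (wordDist (T : Set G) · x) hA
  exact ⟨y, hy, card_le_pow_of_forall_wordDist_le hT hmax⟩

end WordMetric

section MarkovInequality

variable {ι 𝕜 : Type*} [Field 𝕜] [LinearOrder 𝕜] [IsStrictOrderedRing 𝕜]
  {s : Finset ι} {f : ι → 𝕜} {c k : 𝕜}

theorem mul_card_filter_mul_lt_le_card (hf : ∀ i ∈ s, 0 ≤ f i) (hk : 0 ≤ k)
    (hsum : ∑ i ∈ s, f i ≤ #s * c) :
    k * #{i ∈ s | k * c < f i} ≤ #s := by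
  obtain hempty | ⟨i, hi⟩ := {i ∈ s | k * c < f i}.eq_empty_or_nonempty
  · simp [hempty]
  obtain ⟨his, hlt⟩ := mem_filter.1 hi
  have hs : (0 : 𝕜) < #s := mod_cast card_pos.2 ⟨i, his⟩
  have hc_nonneg : 0 ≤ c := nonneg_of_mul_nonneg_right ((sum_nonneg hf).trans hsum) hs
  have hfi : 0 < f i := (mul_nonneg hk hc_nonneg).trans_lt hlt
  have hc : 0 < c := (mul_pos_iff_of_pos_left hs).1 ((sum_pos' hf ⟨i, his, hfi⟩).trans_le hsum)
  refine le_of_mul_le_mul_right ?_ hc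
  calc k * #{i ∈ s | k * c < f i} * c = ∑ i ∈ s with k * c < f i, k * c := by
        rw [sum_const, nsmul_eq_mul]; ring
    _ ≤ ∑ i ∈ s with k * c < f i, f i := sum_le_sum fun i hi => (mem_filter.1 hi).2.le
    _ ≤ ∑ i ∈ s, f i := sum_le_sum_of_subset_of_nonneg (filter_subset _ _) fun i hi _ => hf i hi
    _ ≤ #s * c := hsum

theorem sub_one_mul_card_le_mul_card_filter_le_mul (hf : ∀ i ∈ s, 0 ≤ f i) (hk : 0 ≤ k)
    (hsum : ∑ i ∈ s, f i ≤ #s * c) :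
    (k - 1) * #s ≤ k * #{i ∈ s | f i ≤ k * c} := by
  have hlarge := mul_card_filter_mul_lt_le_card hf hk hsum
  have hsplit : (#{i ∈ s | f i ≤ k * c} : 𝕜) + #{i ∈ s | k * c < f i} = #s := by
    simp only [← not_le]
    exact_mod_cast card_filter_add_card_filter_not (f · ≤ k * c)
  linear_combination hlarge - k * hsplit

end MarkovInequality

theorem far_points_with_close_images_general {H X : Type*} [Group H] [Fintype H]
    [SeminormedAddCommGroup X] {T : Finset H} (hT : Subgroup.closure (T : Set H) = ⊤) {C : ℝ}
    {Φ : H → X} (hmean : 1 / (Fintype.card H : ℝ) * ∑ x, ‖Φ x‖ ^ 2 ≤ C) :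
    ∃ x y : H,
      Real.log ((Fintype.card H : ℝ) / 2) / Real.log (2 * #T + 1) ≤ wordDist (T : Set H) x y ∧
      ‖Φ x - Φ y‖ ≤ 2 * √(2 * C) := by
  have hH : (0 : ℝ) < Fintype.card H := mod_cast Fintype.card_pos
  let A : Finset H := {x | ‖Φ x‖ ^ 2 ≤ 2 * C}
  have hnorm : ∀ x ∈ A, ‖Φ x‖ ≤ √(2 * C) := fun x hx => Real.le_sqrt_of_sq_le (mem_filter.1 hx).2
  have hhalf : (Fintype.card H : ℝ) / 2 ≤ #A := by
    have hmarkov := sub_one_mul_card_le_mul_card_filter_le_mul (s := univ)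
      (fun x _ => sq_nonneg ‖Φ x‖) zero_le_two (by rwa [one_div, inv_mul_le_iff₀ hH] at hmean)
    rw [card_univ] at hmarkov
    linarith
  obtain ⟨y, hy⟩ : A.Nonempty := card_pos.1 (by exact_mod_cast (half_pos hH).trans_le hhalf)
  obtain ⟨x, hx, hcard⟩ := exists_mem_card_le_pow_wordDist hT ⟨y, hy⟩ y
  refine ⟨x, y, div_le_of_le_mul₀ (Real.log_nonneg (by simp)) (Nat.cast_nonneg _) ?_, ?_⟩
  · rw [← Real.log_pow]
    exact Real.log_le_log (half_pos hH) (hhalf.trans (mod_cast hcard))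
  · calc ‖Φ x - Φ y‖ ≤ ‖Φ x‖ + ‖Φ y‖ := norm_sub_le _ _
      _ ≤ √(2 * C) + √(2 * C) := add_le_add (hnorm x hx) (hnorm y hy)
      _ = 2 * √(2 * C) := (two_mul _).symm

/-- If `H` is a finite group with generating set `T` of cardinality `d`, `X` a
normed space, and `Φ : H → X` a `1`-Lipschitz map (for the word metric `d_T`)
with mean square norm at most `C`, then there are two points `x, y ∈ H` with
`d_T(x, y) > log(#H / 2) / log(2d + 1) - 1` and `‖Φ x - Φ y‖ ≤ 2 √(2C)`. -/
theorem far_points_with_close_images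
    (H : Type) [Group H] [Fintype H] (d : ℕ) (T : Finset H)
    (hcard : T.card = d)
    (hgen : Subgroup.closure (T : Set H) = ⊤)
    (X : Type*) [NormedAddCommGroup X]
    (C : ℝ) (hC : 0 < C) (Φ : H → X)
    (hlip : ∀ x y : H, ‖Φ x - Φ y‖ ≤ (wordDist (T : Set H) x y : ℝ))
    (hmean : (1 / (Fintype.card H : ℝ)) * ∑ x : H, ‖Φ x‖ ^ 2 ≤ C) :
    ∃ x y : H,
      Real.log ((Fintype.card H : ℝ) / 2) / Real.log (2 * d + 1) - 1 <
        (wordDist (T : Set H) x y : ℝ) ∧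
      ‖Φ x - Φ y‖ ≤ 2 * Real.sqrt (2 * C) := by
  subst hcard
  obtain ⟨x, y, hfar, hclose⟩ := far_points_with_close_images_general hgen hmean
  exact ⟨x, y, (sub_one_lt _).trans_le hfar, hclose⟩
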